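/- Let n ≥ 1 be an integer and let u : ℝⁿ → ℝ be a smooth compactly supported function. Then lim_{s→1⁻} (c_{n,s}/2) ∬_{ℝⁿ×ℝⁿ} |u(x) − u(y)|² / |x−y|^{n+2s} dx dy = ∫_{ℝⁿ} |∇u(x)|² dx. That is, the squared L²(ℝⁿ×ℝⁿ)-norm of the fractional gradient ∇^s u converges, as s → 1⁻, to the squared L²(ℝⁿ)-norm of the classical gradient ∇u. -/

import Mathlib

open MeasureTheory
noncomputable section

/-- Euclidean space ℝⁿ. -/
abbrev RR (n : ℕ) := EuclideanSpace ℝ (Fin n)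

/-- The constant c_{n,s} = 4^s Γ(n/2+s) / (π^{n/2} |Γ(-s)|). -/
def cns (n : ℕ) (s : ℝ) : ℝ :=
  (4 : ℝ) ^ s * Real.Gamma ((n : ℝ) / 2 + s) / (Real.pi ^ ((n : ℝ) / 2) * |Real.Gamma (-s)|)

/-- Volume of the unit ball. -/
def VV (n : ℕ) : ℝ := (volume : Measure (RR n)).real (Metric.ball 0 1)

lemma VV_eq (n : ℕ) (hn : 1 ≤ n) : VV n = Real.pi ^ ((n : ℝ) / 2) / Real.Gamma ((n : ℝ) / 2 + 1) := by
  have : Nonempty (Fin n) := ⟨⟨0, hn⟩⟩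
  have hG : 0 < Real.Gamma ((n : ℝ) / 2 + 1) := Real.Gamma_pos_of_pos (by positivity)
  unfold VV Measure.real
  rw [EuclideanSpace.volume_ball]
  simp only [Fintype.card_fin, ENNReal.ofReal_one, one_pow, one_mul]
  rw [ENNReal.toReal_ofReal (by positivity)]
  congr 1
  rw [Real.sqrt_eq_rpow, ← Real.rpow_natCast, ← Real.rpow_mul Real.pi_pos.le]
  congr 1
  ring

lemma const_tendsto (n : ℕ) (hn : 1 ≤ n) :
    Filter.Tendsto (fun s : ℝ => cns n s * VV n / (4 * (1 - s)))
      (nhdsWithin 1 (Set.Iio 1)) (nhds 1) := by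
  have hG : 0 < Real.Gamma ((n : ℝ) / 2 + 1) := Real.Gamma_pos_of_pos (by positivity)
  have hpi : 0 < Real.pi ^ ((n : ℝ) / 2) := Real.rpow_pos_of_pos Real.pi_pos _
  have h1 : Filter.Tendsto (fun s : ℝ => (4 : ℝ) ^ s * Real.Gamma ((n : ℝ) / 2 + s) * s /
      (4 * Real.Gamma ((n : ℝ) / 2 + 1) * Real.Gamma (2 - s))) (nhds 1) (nhds 1) := by
    have hc : ContinuousAt (fun s : ℝ => (4 : ℝ) ^ s * Real.Gamma ((n : ℝ) / 2 + s) * s /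
      (4 * Real.Gamma ((n : ℝ) / 2 + 1) * Real.Gamma (2 - s))) 1 := by
      have hg1 : ContinuousAt (fun s : ℝ => Real.Gamma ((n : ℝ) / 2 + s)) 1 := by
        apply ContinuousAt.comp (g := Real.Gamma)
        · apply DifferentiableAt.continuousAt (𝕜 := ℝ)
          apply Real.differentiableAt_Gamma
          intro m
          have : (0 : ℝ) ≤ m := by positivity
          have : (0 : ℝ) ≤ n := by positivity
          intro h
          linarith
        · fun_prop
      have hg2 : ContinuousAt (fun s : ℝ => Real.Gamma (2 - s)) 1 := by
        apply ContinuousAt.comp (g := Real.Gamma)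
        · apply DifferentiableAt.continuousAt (𝕜 := ℝ)
          apply Real.differentiableAt_Gamma
          intro m
          have : (0 : ℝ) ≤ m := by positivity
          intro h
          linarith
        · fun_prop
      have h4 : ContinuousAt (fun s : ℝ => (4 : ℝ) ^ s) 1 :=
        (Real.continuous_const_rpow (by norm_num)).continuousAt
      apply ContinuousAt.div ((h4.mul hg1).mul continuousAt_id) (continuousAt_const.mul hg2)
      have : (2 : ℝ) - 1 = 1 := by norm_num
      change 4 * Real.Gamma ((n : ℝ) / 2 + 1) * Real.Gamma (2 - 1) ≠ 0
      rw [this, Real.Gamma_one]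
      positivity
    have := hc.tendsto
    convert this using 2
    have : (2 : ℝ) - 1 = 1 := by norm_num
    rw [this, Real.Gamma_one, Real.rpow_one]
    field_simp
  refine (h1.mono_left nhdsWithin_le_nhds).congr' ?_
  filter_upwards [Ioo_mem_nhdsLT (show (0 : ℝ) < 1 by norm_num)] with s hs
  obtain ⟨hs0, hs1⟩ := hs
  have e1 : Real.Gamma (1 - s) = -s * Real.Gamma (-s) := by
    rw [← Real.Gamma_add_one (by linarith : (-s) ≠ 0)]
    ring_nf
  have e2 : Real.Gamma (2 - s) = (1 - s) * Real.Gamma (1 - s) := by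
    rw [← Real.Gamma_add_one (by linarith : (1 - s) ≠ 0)]
    ring_nf
  have p2 : 0 < Real.Gamma (2 - s) := Real.Gamma_pos_of_pos (by linarith)
  have p1 : 0 < Real.Gamma (1 - s) := Real.Gamma_pos_of_pos (by linarith)
  have e3 : |Real.Gamma (-s)| = Real.Gamma (1 - s) / s := by
    have : Real.Gamma (-s) = - (Real.Gamma (1 - s) / s) := by
      rw [e1]; field_simp
    rw [this, abs_neg, abs_of_pos (by positivity)]
  have h1s : 0 < 1 - s := by linarith
  unfold cns
  rw [VV_eq n hn, e3, e2]
  field_simp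

lemma radial_in (n : ℕ) (hn : 1 ≤ n) (b : ℝ) (hb : -(n : ℝ) < b) :
    Integrable (fun x : RR n => (Set.Iio 1).indicator (fun r : ℝ => r ^ b) ‖x‖) ∧
    ∫ x : RR n, (Set.Iio 1).indicator (fun r : ℝ => r ^ b) ‖x‖ = n * VV n / (b + n) := by
  have : Nonempty (Fin n) := ⟨⟨0, hn⟩⟩
  have key : ∀ y ∈ Set.Ioi (0 : ℝ), y ^ (n - 1) • (Set.Iio 1).indicator (fun r : ℝ => r ^ b) y
      = (Set.Iio 1).indicator (fun r : ℝ => r ^ (b + n - 1)) y := by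
    intro y hy
    have hy : 0 < y := hy
    by_cases h : y ∈ Set.Iio (1 : ℝ)
    · simp only [Set.indicator_of_mem h, smul_eq_mul]
      rw [← Real.rpow_natCast, ← Real.rpow_add hy, Nat.cast_sub hn]
      congr 1
      push_cast; ring
    · simp [Set.indicator_of_notMem h]
  constructor
  · rw [integrable_fun_norm_addHaar volume (f := (Set.Iio 1).indicator (fun r : ℝ => r ^ b))]
    rw [finrank_euclideanSpace, Fintype.card_fin]
    rw [integrableOn_congr_fun key measurableSet_Ioi]
    rw [IntegrableOn, integrable_indicator_iff measurableSet_Iio, IntegrableOn,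
      Measure.restrict_restrict measurableSet_Iio, Set.inter_comm, Set.Ioi_inter_Iio,
      ← IntegrableOn, intervalIntegral.integrableOn_Ioo_rpow_iff one_pos]
    linarith
  · rw [integral_fun_norm_addHaar volume ((Set.Iio 1).indicator (fun r : ℝ => r ^ b))]
    rw [finrank_euclideanSpace, Fintype.card_fin]
    rw [setIntegral_congr_fun measurableSet_Ioi key, integral_indicator measurableSet_Iio,
      Measure.restrict_restrict measurableSet_Iio, Set.inter_comm, Set.Ioi_inter_Iio,
      ← integral_Ioc_eq_integral_Ioo, ← intervalIntegral.integral_of_le zero_le_one,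
      integral_rpow (Or.inl (by linarith))]
    rw [Real.zero_rpow (by linarith)]
    simp [VV]
    ring

lemma radial_out (n : ℕ) (hn : 1 ≤ n) (b : ℝ) (hb : b < -(n : ℝ)) :
    Integrable (fun x : RR n => (Set.Ici 1).indicator (fun r : ℝ => r ^ b) ‖x‖) := by
  have : Nonempty (Fin n) := ⟨⟨0, hn⟩⟩
  have key : ∀ y ∈ Set.Ioi (0 : ℝ), y ^ (n - 1) • (Set.Ici 1).indicator (fun r : ℝ => r ^ b) y
      = (Set.Ici 1).indicator (fun r : ℝ => r ^ (b + n - 1)) y := by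
    intro y hy
    have hy : 0 < y := hy
    by_cases h : y ∈ Set.Ici (1 : ℝ)
    · simp only [Set.indicator_of_mem h, smul_eq_mul]
      rw [← Real.rpow_natCast, ← Real.rpow_add hy, Nat.cast_sub hn]
      congr 1
      push_cast; ring
    · simp [Set.indicator_of_notMem h]
  rw [integrable_fun_norm_addHaar volume (f := (Set.Ici 1).indicator (fun r : ℝ => r ^ b))]
  rw [finrank_euclideanSpace, Fintype.card_fin]
  rw [integrableOn_congr_fun key measurableSet_Ioi]
  rw [IntegrableOn, integrable_indicator_iff measurableSet_Ici]
  have hsub : Set.Ici (1 : ℝ) ⊆ Set.Ioi 0 :=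
    fun x (hx : (1:ℝ) ≤ x) => lt_of_lt_of_le one_pos hx
  rw [IntegrableOn, Measure.restrict_restrict measurableSet_Ici, Set.inter_eq_left.2 hsub,
    ← IntegrableOn,
    integrableOn_Ici_iff_integrableOn_Ioi]
  exact integrableOn_Ioi_rpow_of_lt (by linarith) one_pos

lemma quad_integral (n : ℕ) (hn : 1 ≤ n) (w : ℝ → ℝ) (hwm : Measurable w)
    (hw : Integrable (fun h : RR n => ‖h‖ ^ 2 * w ‖h‖)) (v : RR n) :
    ∫ h : RR n, (inner ℝ v h) ^ 2 * w ‖h‖ = ‖v‖ ^ 2 / n * ∫ h : RR n, ‖h‖ ^ 2 * w ‖h‖ := by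
  have hint : ∀ v : RR n, Integrable (fun h : RR n => (inner ℝ v h) ^ 2 * w ‖h‖) := by
    intro v
    refine (hw.norm.const_mul (‖v‖ ^ 2)).mono' ?_ ?_
    · exact (by fun_prop : Measurable _).aestronglyMeasurable
    · refine Filter.Eventually.of_forall fun h => ?_
      rw [norm_mul, norm_mul, norm_pow, norm_pow, ← mul_assoc, ← mul_pow]
      gcongr
      simpa using norm_inner_le_norm (𝕜 := ℝ) v h
  have hrot : ∀ v v' : RR n, ‖v‖ = ‖v'‖ →
      ∫ h : RR n, (inner ℝ v h) ^ 2 * w ‖h‖ = ∫ h : RR n, (inner ℝ v' h) ^ 2 * w ‖h‖ := by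
    intro v v' hvv
    let R := (Submodule.span ℝ {v - v'})ᗮ.reflection
    have hR : R v = v' := Submodule.reflection_sub hvv
    have hcomp := R.measurePreserving.integral_comp R.toMeasurableEquiv.measurableEmbedding
      (fun h : RR n => (inner ℝ v' h) ^ 2 * w ‖h‖)
    rw [← hcomp]
    simp_rw [← hR, LinearIsometryEquiv.inner_map_map, LinearIsometryEquiv.norm_map]
  let e : Fin n → RR n := fun i => EuclideanSpace.single i (1 : ℝ)
  have hsum : ∑ i, ∫ h : RR n, (inner ℝ (e i) h) ^ 2 * w ‖h‖ = ∫ h : RR n, ‖h‖ ^ 2 * w ‖h‖ := by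
    rw [← integral_finsetSum _ (fun i _ => hint _)]
    congr 1; ext h
    rw [← Finset.sum_mul, EuclideanSpace.norm_sq_eq]
    simp [e, EuclideanSpace.inner_single_left]
  have hi : ∀ i, ∫ h : RR n, (inner ℝ v h) ^ 2 * w ‖h‖ =
      ‖v‖ ^ 2 * ∫ h : RR n, (inner ℝ (e i) h) ^ 2 * w ‖h‖ := by
    intro i
    rw [hrot v (‖v‖ • e i) (by simp [e, norm_smul]), ← integral_const_mul]
    congr 1; ext h
    rw [inner_smul_left]
    simp; ring
  have hn' : (n : ℝ) ≠ 0 := by positivity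
  rw [← hsum]
  have : (n : ℝ) * ∫ h : RR n, (inner ℝ v h) ^ 2 * w ‖h‖ =
      ‖v‖ ^ 2 * ∑ i, ∫ h : RR n, (inner ℝ (e i) h) ^ 2 * w ‖h‖ := by
    rw [Finset.mul_sum, ← Finset.sum_congr rfl (fun i _ => hi i)]
    simp
  field_simp
  linarith

/-- squared L2 norm of the increment -/
def FF {n : ℕ} (u : RR n → ℝ) (h : RR n) : ℝ := ∫ x, (u x - u (x + h)) ^ 2

/-- quadratic form of the derivative -/
def QQ {n : ℕ} (u : RR n → ℝ) (h : RR n) : ℝ := ∫ x, (fderiv ℝ u x h) ^ 2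

lemma incr_integrable {n : ℕ} {u : RR n → ℝ} (hc : Continuous u) (hcu : HasCompactSupport u)
    (h : RR n) : Integrable (fun x => (u x - u (x + h)) ^ 2) := by
  apply Continuous.integrable_of_hasCompactSupport (by fun_prop)
  have h2 : HasCompactSupport (fun x => u (x + h)) :=
    hcu.comp_homeomorph (Homeomorph.addRight h)
  have h3 : HasCompactSupport (fun x => u x - u (x + h)) := hcu.sub h2
  exact h3.comp_left (g := fun t : ℝ => t ^ 2) (by simp)

lemma fd_integrable {n : ℕ} {u : RR n → ℝ} (hc : Continuous (fderiv ℝ u))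
    (hcu : HasCompactSupport u) (h : RR n) : Integrable (fun x => (fderiv ℝ u x h) ^ 2) := by
  apply Continuous.integrable_of_hasCompactSupport (by fun_prop)
  exact (hcu.fderiv (𝕜 := ℝ)).comp_left (g := fun t : RR n →L[ℝ] ℝ => (t h) ^ 2) (by simp)

lemma fdn_integrable {n : ℕ} {u : RR n → ℝ} (hc : Continuous (fderiv ℝ u))
    (hcu : HasCompactSupport u) : Integrable (fun x => ‖fderiv ℝ u x‖ ^ 2) := by
  apply Continuous.integrable_of_hasCompactSupport (by fun_prop)
  exact (hcu.fderiv (𝕜 := ℝ)).comp_left (g := fun t : RR n →L[ℝ] ℝ => ‖t‖ ^ 2) (by simp)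

lemma FF_bound {n : ℕ} {u : RR n → ℝ} (hc : Continuous u) (hcu : HasCompactSupport u)
    (h : RR n) : FF u h ≤ 4 * ∫ x, u x ^ 2 := by
  have hu2 : Integrable (fun x => u x ^ 2) := by
    apply Continuous.integrable_of_hasCompactSupport (by fun_prop)
    exact hcu.comp_left (g := fun t : ℝ => t ^ 2) (by simp)
  have hu3 : Integrable (fun x => u (x + h) ^ 2) := hu2.comp_add_right h
  have e : ∫ x, u (x + h) ^ 2 = ∫ x, u x ^ 2 := integral_add_right_eq_self (fun x => u x ^ 2) h
  calc FF u h ≤ ∫ x, (2 * u x ^ 2 + 2 * u (x + h) ^ 2) := by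
        apply integral_mono (incr_integrable hc hcu h) ((hu2.const_mul 2).add (hu3.const_mul 2))
        intro x
        simp only [Pi.add_apply]
        nlinarith [sq_nonneg (u x + u (x + h))]
    _ = 4 * ∫ x, u x ^ 2 := by
        rw [integral_add (hu2.const_mul 2) (hu3.const_mul 2), integral_const_mul,
          integral_const_mul, e]
        ring

lemma QQ_bound {n : ℕ} {u : RR n → ℝ} (hc : Continuous (fderiv ℝ u))
    (hcu : HasCompactSupport u) (h : RR n) :
    QQ u h ≤ (∫ x, ‖fderiv ℝ u x‖ ^ 2) * ‖h‖ ^ 2 := by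
  unfold QQ
  rw [← integral_mul_const]
  apply integral_mono (fd_integrable hc hcu h) ((fdn_integrable hc hcu).mul_const _)
  intro x
  simp only
  rw [← mul_pow, ← sq_abs]
  gcongr
  exact (fderiv ℝ u x).le_opNorm h

lemma FQ_bound {n : ℕ} {u : RR n → ℝ} (hu : ContDiff ℝ (⊤ : ℕ∞) u)
    (hcu : HasCompactSupport u) :
    ∃ C, 0 ≤ C ∧ ∀ h : RR n, ‖h‖ < 1 → |FF u h - QQ u h| ≤ C * ‖h‖ ^ 3 := by
  have hu1 : ContDiff ℝ 1 (fderiv ℝ u) := hu.fderiv_right (WithTop.coe_le_coe.2 (le_top : (1 + 1 : ℕ∞) ≤ ⊤))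
  have hdc : Continuous (fderiv ℝ u) := hu1.continuous
  have hcd : HasCompactSupport (fderiv ℝ u) := hcu.fderiv (𝕜 := ℝ)
  have hdiff : Differentiable ℝ u := hu.differentiable (by simp)
  obtain ⟨K, hK⟩ := hu1.lipschitzWith_of_hasCompactSupport hcd (by simp)
  obtain ⟨M, hM⟩ := hcd.exists_bound_of_continuous hdc
  have hM0 : 0 ≤ M := (norm_nonneg _).trans (hM 0)
  let T : Set (RR n) := Metric.cthickening 1 (tsupport u)
  have hT : IsCompact T := IsCompact.cthickening hcu
  refine ⟨K * (2 * M) * volume.real T, by positivity, fun h hh => ?_⟩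
  have hd : ∀ x, |(u x - u (x + h)) ^ 2 - (fderiv ℝ u x h) ^ 2| ≤
      T.indicator (fun _ => K * (2 * M) * ‖h‖ ^ 3) x := by
    intro x
    by_cases hx : x ∈ T
    · rw [Set.indicator_of_mem hx]
      have b1 : |u (x + h) - u x - fderiv ℝ u x h| ≤ K * ‖h‖ * ‖h‖ := by
        have := (convex_closedBall x ‖h‖).norm_image_sub_le_of_norm_fderiv_le' (𝕜 := ℝ) (f := u)
          (φ := fderiv ℝ u x) (C := K * ‖h‖) (x := x) (y := x + h)
          (fun z _ => hdiff z) (fun z hz => by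
            refine (hK.norm_sub_le z x).trans ?_
            gcongr
            simpa [dist_eq_norm] using hz) (by simp) (by simp)
        simpa using this
      have b2 : |fderiv ℝ u x h| ≤ M * ‖h‖ :=
        ((fderiv ℝ u x).le_opNorm h).trans (by gcongr; exact hM x)
      have b3 : |u (x + h) - u x| ≤ M * ‖h‖ := by
        have := convex_univ.norm_image_sub_le_of_norm_fderiv_le (𝕜 := ℝ) (f := u)
          (C := M) (x := x) (y := x + h) (fun z _ => hdiff z) (fun z _ => hM z) (by simp) (by simp)
        simpa using this
      have : (u x - u (x + h)) ^ 2 - (fderiv ℝ u x h) ^ 2 =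
        (u (x + h) - u x - fderiv ℝ u x h) * ((u (x + h) - u x) + fderiv ℝ u x h) := by ring
      rw [this, abs_mul]
      calc _ ≤ (K * ‖h‖ * ‖h‖) * (M * ‖h‖ + M * ‖h‖) := by
            gcongr
            exact (abs_add_le _ _).trans (add_le_add b3 b2)
        _ = _ := by ring
    · rw [Set.indicator_of_notMem hx]
      have h0 : u x = 0 := by
        apply image_eq_zero_of_notMem_tsupport
        exact fun hx' => hx (Metric.self_subset_cthickening _ hx')
      have h1 : u (x + h) = 0 := by
        apply image_eq_zero_of_notMem_tsupport
        intro hx'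
        apply hx
        apply Metric.mem_cthickening_of_dist_le x (x + h) 1 _ hx'
        simpa using hh.le
      have h2 : fderiv ℝ u x = 0 := by
        apply image_eq_zero_of_notMem_tsupport
        intro hx'
        exact hx (Metric.self_subset_cthickening _ (tsupport_fderiv_subset ℝ hx'))
      simp [h0, h1, h2]
  unfold FF QQ
  rw [← integral_sub (incr_integrable hu.continuous hcu h) (fd_integrable hdc hcu h)]
  have hTm : MeasurableSet T := hT.isClosed.measurableSet
  have hTi : Integrable (T.indicator (fun _ : RR n => K * (2 * M) * ‖h‖ ^ 3)) := by
    rw [integrable_indicator_iff hTm]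
    exact integrableOn_const hT.measure_lt_top.ne
  rw [← Real.norm_eq_abs]
  refine (norm_integral_le_of_norm_le hTi (Filter.Eventually.of_forall hd)).trans ?_
  rw [integral_indicator hTm, setIntegral_const, smul_eq_mul]
  apply le_of_eq; ring

lemma FF_meas {n : ℕ} {u : RR n → ℝ} (hc : Continuous u) : Measurable (FF u) := by
  have : StronglyMeasurable (fun p : RR n × RR n => (u p.1 - u (p.1 + p.2)) ^ 2) :=
    (by fun_prop : Continuous _).stronglyMeasurable
  exact (this.integral_prod_left' (μ := volume)).measurable

lemma QQ_meas {n : ℕ} {u : RR n → ℝ} (hc : Continuous (fderiv ℝ u)) : Measurable (QQ u) := by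
  have : StronglyMeasurable (fun p : RR n × RR n => (fderiv ℝ u p.1 p.2) ^ 2) :=
    (by fun_prop : Continuous _).stronglyMeasurable
  exact (this.integral_prod_left' (μ := volume)).measurable

/-- truncated weight -/
def ww (n : ℕ) (s : ℝ) : ℝ → ℝ := (Set.Iio 1).indicator (fun r : ℝ => r ^ (-((n : ℝ) + 2 * s)))

lemma ww_meas (n : ℕ) (s : ℝ) : Measurable (ww n s) :=
  Measurable.indicator (by fun_prop) measurableSet_Iio

lemma ww_sq (n : ℕ) (hn : 1 ≤ n) (s : ℝ) (hs : 1 / 2 < s) (h : RR n) :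
    ‖h‖ ^ 2 * ww n s ‖h‖ =
      (Set.Iio 1).indicator (fun r : ℝ => r ^ (2 - (n : ℝ) - 2 * s)) ‖h‖ := by
  have hn' : (1 : ℝ) ≤ n := by exact_mod_cast hn
  unfold ww
  by_cases hh : ‖h‖ ∈ Set.Iio (1 : ℝ)
  · simp only [Set.indicator_of_mem hh]
    rcases (norm_nonneg h).eq_or_lt with h0 | h0
    · rw [← h0, Real.zero_rpow (by linarith), Real.zero_rpow (by linarith)]
      simp
    · rw [← Real.rpow_natCast, ← Real.rpow_add h0]
      congr 1
      push_cast; ring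
  · simp [Set.indicator_of_notMem hh]

lemma ww_sq_int (n : ℕ) (hn : 1 ≤ n) (s : ℝ) (hs : 1 / 2 < s) (hs1 : s < 1) :
    Integrable (fun h : RR n => ‖h‖ ^ 2 * ww n s ‖h‖) ∧
    ∫ h : RR n, ‖h‖ ^ 2 * ww n s ‖h‖ = n * VV n / (2 - 2 * s) := by
  simp_rw [ww_sq n hn s hs]
  have := radial_in n hn (2 - (n : ℝ) - 2 * s) (by linarith)
  refine ⟨this.1, this.2.trans ?_⟩
  congr 1; ring

lemma main_term {n : ℕ} (hn : 1 ≤ n) {u : RR n → ℝ} (hc : Continuous (fderiv ℝ u))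
    (hcu : HasCompactSupport u) (s : ℝ) (hs : 1 / 2 < s) (hs1 : s < 1) :
    Integrable (fun h : RR n => QQ u h * ww n s ‖h‖) ∧
    ∫ h : RR n, QQ u h * ww n s ‖h‖ = (∫ x : RR n, ‖gradient u x‖ ^ 2) * (VV n / (2 - 2 * s)) := by
  obtain ⟨hwi, hwe⟩ := ww_sq_int n hn s hs hs1
  have hD := fdn_integrable hc hcu
  have hwm := ww_meas n s
  have hP : Integrable (fun p : RR n × RR n => (fderiv ℝ u p.2 p.1) ^ 2 * ww n s ‖p.1‖)
      (volume.prod volume) := by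
    refine (hwi.norm.mul_prod hD).mono' ?_ ?_
    · have h1 : Measurable (fun p : RR n × RR n => (fderiv ℝ u p.2 p.1) ^ 2) :=
        (by fun_prop : Continuous _).measurable
      exact (h1.mul (hwm.comp (by fun_prop))).aestronglyMeasurable
    · refine Filter.Eventually.of_forall fun p => ?_
      have := (fderiv ℝ u p.2).le_opNorm p.1
      rw [norm_mul, norm_mul, norm_pow, norm_pow, norm_norm]
      calc _ ≤ (‖fderiv ℝ u p.2‖ * ‖p.1‖) ^ 2 * ‖ww n s ‖p.1‖‖ := by gcongr
        _ = _ := by ring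
  have e1 : ∀ h, QQ u h * ww n s ‖h‖ = ∫ x, (fderiv ℝ u x h) ^ 2 * ww n s ‖h‖ := by
    intro h; rw [integral_mul_const]; rfl
  simp_rw [e1]
  refine ⟨hP.integral_prod_left, ?_⟩
  rw [integral_integral_swap hP]
  have e2 : ∀ x, ∫ h, (fderiv ℝ u x h) ^ 2 * ww n s ‖h‖ =
      ‖gradient u x‖ ^ 2 * (VV n / (2 - 2 * s)) := by
    intro x
    have := quad_integral n hn (ww n s) hwm hwi (gradient u x)
    rw [hwe] at this
    have hg : ∀ h, inner ℝ (gradient u x) h = fderiv ℝ u x h := by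
      intro h; simp [gradient]
    simp_rw [hg] at this
    rw [this]
    have hn' : (n : ℝ) ≠ 0 := by positivity
    have : 2 - 2 * s ≠ 0 := by linarith
    field_simp
  simp_rw [e2]
  rw [integral_mul_const]

/-- dominating function -/
def GG (n : ℕ) (h : RR n) : ℝ := (Set.Iio 1).indicator (fun r : ℝ => r ^ (1 - (n : ℝ))) ‖h‖ +
    (Set.Ici 1).indicator (fun r : ℝ => r ^ (-(n : ℝ) - 1)) ‖h‖

lemma GG_int (n : ℕ) (hn : 1 ≤ n) : Integrable (GG n) :=
  (radial_in n hn _ (by linarith)).1.add (radial_out n hn _ (by linarith))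

lemma FF_nonneg {n : ℕ} (u : RR n → ℝ) (h : RR n) : 0 ≤ FF u h :=
  integral_nonneg fun x => sq_nonneg _

lemma err_bound {n : ℕ} (hn : 1 ≤ n) {u : RR n → ℝ} (hu : ContDiff ℝ (⊤ : ℕ∞) u)
    (hcu : HasCompactSupport u) :
    ∃ C, ∀ s : ℝ, 1 / 2 < s → s < 1 → ∀ h : RR n,
      ‖FF u h / ‖h‖ ^ ((n : ℝ) + 2 * s) - QQ u h * ww n s ‖h‖‖ ≤ C * GG n h := by
  obtain ⟨C1, hC1, hb⟩ := FQ_bound hu hcu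
  have hI : 0 ≤ 4 * ∫ x, u x ^ 2 := by
    have : 0 ≤ ∫ x, u x ^ 2 := integral_nonneg fun x => sq_nonneg _
    positivity
  refine ⟨C1 + 4 * ∫ x, u x ^ 2, fun s hs hs1 h => ?_⟩
  have hn' : (1 : ℝ) ≤ n := by exact_mod_cast hn
  unfold GG ww
  by_cases hh : ‖h‖ < 1
  · have m1 : ‖h‖ ∈ Set.Iio (1 : ℝ) := hh
    have m2 : ‖h‖ ∉ Set.Ici (1 : ℝ) := by simpa using hh
    rw [Set.indicator_of_mem m1, Set.indicator_of_mem m1, Set.indicator_of_notMem m2, add_zero]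
    rw [Real.rpow_neg (norm_nonneg _), ← div_eq_mul_inv, ← sub_div, norm_div]
    rcases (norm_nonneg h).eq_or_lt with h0 | h0
    · rw [← h0, Real.zero_rpow (by linarith)]
      simp only [norm_zero, div_zero]
      positivity
    have hp : 0 < ‖h‖ ^ ((n : ℝ) + 2 * s) := Real.rpow_pos_of_pos h0 _
    rw [Real.norm_of_nonneg hp.le, div_le_iff₀ hp, mul_assoc, ← Real.rpow_add h0]
    refine (hb h hh).trans ?_
    gcongr
    · linarith
    · rw [← Real.rpow_natCast]
      apply Real.rpow_le_rpow_of_exponent_ge h0 hh.le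
      push_cast; linarith
  · have m1 : ‖h‖ ∉ Set.Iio (1 : ℝ) := hh
    have m2 : ‖h‖ ∈ Set.Ici (1 : ℝ) := by simpa using hh
    have m3 : 1 ≤ ‖h‖ := m2
    rw [Set.indicator_of_notMem m1, Set.indicator_of_notMem m1, Set.indicator_of_mem m2, zero_add,
      mul_zero, sub_zero, div_eq_mul_inv, ← Real.rpow_neg (norm_nonneg _), norm_mul,
      Real.norm_of_nonneg (FF_nonneg u h), Real.norm_of_nonneg (by positivity)]
    have := FF_bound hu.continuous hcu h
    gcongr
    · linarith
    · linarith

lemma double_eq {n : ℕ} {u : RR n → ℝ} (hc : Continuous u) (hcu : HasCompactSupport u) (a : ℝ)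
    (hi : Integrable (fun h : RR n => FF u h / ‖h‖ ^ a)) :
    ∫ p : RR n × RR n, (u p.1 - u p.2) ^ 2 / ‖p.1 - p.2‖ ^ a = ∫ h : RR n, FF u h / ‖h‖ ^ a := by
  have hmp := measurePreserving_prod_add (volume : Measure (RR n)) (volume : Measure (RR n))
  have hemb : MeasurableEmbedding (fun z : RR n × RR n => (z.1, z.1 + z.2)) :=
    (MeasurableEquiv.shearAddRight (RR n)).measurableEmbedding
  rw [Measure.volume_eq_prod, ← hmp.integral_comp hemb]
  have hu' : Measurable u := hc.measurable
  have e : ∀ h : RR n, ∫ x, (u x - u (x + h)) ^ 2 / ‖x - (x + h)‖ ^ a = FF u h / ‖h‖ ^ a := by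
    intro h
    simp only [sub_add_cancel_left, norm_neg]
    rw [integral_div]; rfl
  rw [integral_prod_symm]
  · simp only [e]
  · rw [integrable_prod_iff']
    · constructor
      · refine Filter.Eventually.of_forall fun h => ?_
        simp only [sub_add_cancel_left, norm_neg]
        exact (incr_integrable hc hcu h).div_const _
      · convert hi using 2 with h
        rw [← e h]
        congr 1; ext x
        rw [Real.norm_of_nonneg (by positivity)]
    · exact (by fun_prop : Measurable _).aestronglyMeasurable

theorem fractional_gradient_norm_tendsto_gradient_norm
    (n : ℕ) (hn : 1 ≤ n) (u : RR n → ℝ)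
    (hu : ContDiff ℝ (⊤ : ℕ∞) u) (hcu : HasCompactSupport u) :
    Filter.Tendsto
      (fun s : ℝ => (cns n s / 2) *
        ∫ p : RR n × RR n, (u p.1 - u p.2) ^ 2 / ‖p.1 - p.2‖ ^ ((n : ℝ) + 2 * s))
      (nhdsWithin 1 (Set.Iio 1))
      (nhds (∫ x : RR n, ‖gradient u x‖ ^ 2)) := by
  have hdc : Continuous (fderiv ℝ u) := hu.continuous_fderiv (by simp)
  obtain ⟨C, hC⟩ := err_bound hn hu hcu
  have hGi := GG_int n hn
  set D := ∫ x : RR n, ‖gradient u x‖ ^ 2 with hD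
  have hV : 0 < VV n := by
    rw [VV_eq n hn]
    have : 0 < Real.Gamma ((n : ℝ) / 2 + 1) := Real.Gamma_pos_of_pos (by positivity)
    positivity
  let I : ℝ → ℝ := fun s => ∫ h : RR n, FF u h / ‖h‖ ^ ((n : ℝ) + 2 * s)
  have hFm := FF_meas hu.continuous
  have hQm := QQ_meas hdc
  have key : ∀ s : ℝ, 1 / 2 < s → s < 1 →
      (∫ p : RR n × RR n, (u p.1 - u p.2) ^ 2 / ‖p.1 - p.2‖ ^ ((n : ℝ) + 2 * s)) = I s ∧
      |I s - D * (VV n / (2 - 2 * s))| ≤ C * ∫ h, GG n h := by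
    intro s hs hs1
    obtain ⟨mi, me⟩ := main_term hn hdc hcu s hs hs1
    have hwm := ww_meas n s
    have hHi : Integrable (fun h : RR n =>
        FF u h / ‖h‖ ^ ((n : ℝ) + 2 * s) - QQ u h * ww n s ‖h‖) :=
      (hGi.const_mul C).mono' ((by fun_prop : Measurable _).aestronglyMeasurable)
        (Filter.Eventually.of_forall (hC s hs hs1))
    have hFi : Integrable (fun h : RR n => FF u h / ‖h‖ ^ ((n : ℝ) + 2 * s)) := by
      refine (hHi.add mi).congr (Filter.Eventually.of_forall fun h => ?_)
      simp
    refine ⟨double_eq hu.continuous hcu _ hFi, ?_⟩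
    rw [← me, ← integral_sub hFi mi, ← integral_const_mul, ← Real.norm_eq_abs]
    exact norm_integral_le_of_norm_le (hGi.const_mul C) (Filter.Eventually.of_forall (hC s hs hs1))
  have hct := const_tendsto n hn
  have hs0 : Filter.Tendsto (fun s : ℝ => 4 * (1 - s) / VV n) (nhdsWithin 1 (Set.Iio 1))
      (nhds 0) := by
    have : Continuous (fun s : ℝ => 4 * (1 - s) / VV n) := by fun_prop
    exact (this.tendsto' 1 0 (by simp)).mono_left nhdsWithin_le_nhds
  have hev : ∀ᶠ s : ℝ in nhdsWithin 1 (Set.Iio 1), 1 / 2 < s ∧ s < 1 :=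
    Ioo_mem_nhdsLT (by norm_num)
  have hc0 : Filter.Tendsto (fun s => cns n s) (nhdsWithin 1 (Set.Iio 1)) (nhds 0) := by
    have := hct.mul hs0
    rw [one_mul] at this
    refine this.congr' ?_
    filter_upwards [hev] with s hs
    have : 1 - s ≠ 0 := by linarith [hs.2]
    field_simp
  have hm : Filter.Tendsto (fun s => D * (cns n s * VV n / (4 * (1 - s))))
      (nhdsWithin 1 (Set.Iio 1)) (nhds D) := by
    simpa using hct.const_mul D
  have he : Filter.Tendsto (fun s => cns n s / 2 * (I s - D * (VV n / (2 - 2 * s))))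
      (nhdsWithin 1 (Set.Iio 1)) (nhds 0) := by
    have hb : Filter.Tendsto (fun s => |cns n s| / 2 * (C * ∫ h, GG n h))
        (nhdsWithin 1 (Set.Iio 1)) (nhds 0) := by
      simpa using (hc0.abs.div_const 2).mul_const (C * ∫ h, GG n h)
    refine squeeze_zero_norm' ?_ hb
    filter_upwards [hev] with s hs
    rw [norm_mul, norm_div, Real.norm_eq_abs, Real.norm_eq_abs, Real.norm_eq_abs, abs_two]
    gcongr
    exact (key s hs.1 hs.2).2
  have := hm.add he
  rw [add_zero] at this
  refine this.congr' ?_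
  filter_upwards [hev] with s hs
  rw [(key s hs.1 hs.2).1]
  have h1 : 1 - s ≠ 0 := by linarith [hs.2]
  have h2 : 2 - 2 * s = 2 * (1 - s) := by ring
  rw [h2]
  field_simp
  ring
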